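/- Fix n ≥ 1 and d ≥ 2. Let σ be the set of multi-indices q ∈ ℕⁿ with |q| = d+1, let R = ℚ[c_q : q ∈ σ] be the polynomial ring in indeterminates c_q, and let P = Σ_{q∈σ} c_q X^q ∈ R[X₁,…,Xₙ] be the generic homogeneous polynomial of degree d+1. Let I be the ideal of R generated by all coefficients (elements of R) of all entries of the matrix (Hess P)³, and let Q⁽¹⁾, Q⁽²⁾, … be the Zhao sequence of P over K = R. Then for every m ≥ 3, every coefficient of Q⁽ᵐ⁾ lies in I. -/

import Mathlib

/-!
Write `H` for the Hessian of `P`, `g = ∇P` and `X` for the vector of variables, and let `J` be the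
ideal of polynomials all of whose coefficients lie in `I`; `J` is stable under differentiation.
As `g` is homogeneous of degree `d`, Euler's identity gives `d • g = H X`, hence `d • H² g = H³ X`,
so the entries of `H² g` lie in `J` (`hessian_sq_mulVec_grad_mem`).

Since `∇Q⁽²⁾ = H g` and `H` is symmetric, `Q⁽³⁾` is a multiple of `(H g) ⬝ g`, where
`d • (H g) ⬝ g = (H² g) ⬝ X ∈ J`; and `Q⁽⁴⁾` is, modulo `J`, a multiple of
`(H g) ⬝ (H g) = (H² g) ⬝ g ∈ J`. For `m ≥ 5` each term `∇Q⁽ᵏ⁾ ⬝ ∇Q⁽ˡ⁾` with `k + l = m` has an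
index `≥ 3`, so strong induction applies. Only the homogeneity of `P` is used, not its genericity.
-/


open MvPolynomial

/-- The Zhao sequence of `P`: `Q⁽¹⁾ = P` and for `m ≥ 2`,
`Q⁽ᵐ⁾ = (1/(2(m-1))) ∑_{k+ℓ=m, k,ℓ≥1} ∇Q⁽ᵏ⁾ ⬝ ∇Q⁽ˡ⁾`. -/
noncomputable def zhaoSeq {n : ℕ} {K : Type*} [CommRing K] [Algebra ℚ K]
    (P : MvPolynomial (Fin n) K) : ℕ → MvPolynomial (Fin n) K
  | 0 => 0
  | 1 => P
  | m + 2 =>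
      ((1 : ℚ) / (2 * (m + 1))) •
        ∑ k ∈ (Finset.Icc 1 (m + 1)).attach,
          ∑ i : Fin n,
            MvPolynomial.pderiv i (zhaoSeq P k.1) *
              MvPolynomial.pderiv i (zhaoSeq P (m + 2 - k.1))
  decreasing_by
  · exact Nat.lt_succ_of_le (Finset.mem_Icc.mp k.2).2
  · have := (Finset.mem_Icc.mp k.2).1
    omega

/-- The Hessian matrix `(DᵢDⱼP)` of a multivariate polynomial. -/
noncomputable def hessian {n : ℕ} {K : Type*} [CommRing K]
    (P : MvPolynomial (Fin n) K) :
    Matrix (Fin n) (Fin n) (MvPolynomial (Fin n) K) :=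
  Matrix.of fun i j => MvPolynomial.pderiv i (MvPolynomial.pderiv j P)

open scoped Matrix

section Zhao

variable {n : ℕ} {K : Type*} [CommRing K]

theorem pderiv_comm_apply (i j : Fin n) (f : MvPolynomial (Fin n) K) :
    pderiv i (pderiv j f) = pderiv j (pderiv i f) := by
  -- the commutator of two derivations is a derivation, and it kills every variable
  have h : ⁅pderiv (R := K) i, pderiv (R := K) j⁆ = 0 := by
    apply MvPolynomial.derivation_ext
    intro k
    rw [Derivation.commutator_apply, pderiv_X, pderiv_X]
    simp [Pi.single_apply, apply_ite]
  have h' := DFunLike.congr_fun h f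
  rw [Derivation.commutator_apply] at h'
  exact sub_eq_zero.mp h'

theorem hessian_transpose (P : MvPolynomial (Fin n) K) : (hessian P)ᵀ = hessian P := by
  ext1 i j
  exact pderiv_comm_apply j i P

theorem pderiv_mem_map_C {I : Ideal K} {f : MvPolynomial (Fin n) K}
    (hf : f ∈ I.map (C : K →+* MvPolynomial (Fin n) K)) (i : Fin n) :
    pderiv i f ∈ I.map (C : K →+* MvPolynomial (Fin n) K) := by
  rw [mem_map_C_iff] at hf ⊢
  intro q
  rw [coeff_pderiv]
  exact I.mul_mem_right _ (hf _)

/-- The gradient `(D₁P, …, DₙP)`. -/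
noncomputable def grad (P : MvPolynomial (Fin n) K) : Fin n → MvPolynomial (Fin n) K :=
  fun i => pderiv i P

/-- The Hessian is self-adjoint for the dot product. -/
theorem hessian_mulVec_dotProduct (P : MvPolynomial (Fin n) K)
    (v w : Fin n → MvPolynomial (Fin n) K) :
    (hessian P *ᵥ v) ⬝ᵥ w = v ⬝ᵥ (hessian P *ᵥ w) := by
  rw [Matrix.dotProduct_mulVec, ← Matrix.mulVec_transpose, hessian_transpose]

/-- Euler's identity for the gradient of a homogeneous polynomial. -/
theorem hessian_mulVec_X {P : MvPolynomial (Fin n) K} {d : ℕ} (hP : P.IsHomogeneous (d + 1)) :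
    hessian P *ᵥ (fun i => X i) = d • grad P := by
  ext1 j
  have h := (hP.pderiv (i := j)).sum_X_mul_pderiv
  rw [Nat.add_sub_cancel] at h
  rw [Pi.smul_apply, grad, ← h]
  simp only [Matrix.mulVec, dotProduct, hessian, Matrix.of_apply]
  refine Finset.sum_congr rfl fun i _ => ?_
  rw [mul_comm, pderiv_comm_apply]

theorem dotProduct_mem {A : Type*} [CommRing A] {J : Ideal A} {v : Fin n → A}
    (hv : ∀ i, v i ∈ J) (w : Fin n → A) : v ⬝ᵥ w ∈ J :=
  Ideal.sum_mem J fun i _ => J.mul_mem_right _ (hv i)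

theorem mem_of_nsmul_mem {A : Type*} [CommRing A] [Algebra ℚ A] {J : Ideal A} {d : ℕ}
    (hd : d ≠ 0) {x : A} (hx : d • x ∈ J) : x ∈ J := by
  have h := Submodule.smul_of_tower_mem J ((d : ℚ)⁻¹) hx
  rwa [← Nat.cast_smul_eq_nsmul ℚ, smul_smul, inv_mul_cancel₀ (by exact_mod_cast hd),
    one_smul] at h

variable [Algebra ℚ K]

/-- `H² g = d⁻¹ H³ X`, so its entries lie in any ideal containing the entries of `H³`. -/
theorem hessian_sq_mulVec_grad_mem {P : MvPolynomial (Fin n) K} {d : ℕ} (hd : d ≠ 0)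
    (hP : P.IsHomogeneous (d + 1)) {J : Ideal (MvPolynomial (Fin n) K)}
    (hJ : ∀ i j, (hessian P ^ 3) i j ∈ J) (i : Fin n) :
    (hessian P *ᵥ (hessian P *ᵥ grad P)) i ∈ J := by
  apply mem_of_nsmul_mem hd
  have h : d • (hessian P *ᵥ (hessian P *ᵥ grad P)) = (hessian P ^ 3) *ᵥ fun i => X i := by
    rw [← Matrix.mulVec_smul, ← Matrix.mulVec_smul, ← hessian_mulVec_X hP,
      Matrix.mulVec_mulVec, Matrix.mulVec_mulVec, pow_succ, pow_two]
  rw [← Pi.smul_apply, h]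
  exact dotProduct_mem (hJ i) _

/-- The defining recursion of the Zhao sequence, in terms of gradients. -/
theorem zhaoSeq_add_two (P : MvPolynomial (Fin n) K) (m : ℕ) :
    zhaoSeq P (m + 2) = ((1 : ℚ) / (2 * (m + 1))) •
      ∑ k ∈ Finset.Icc 1 (m + 1), grad (zhaoSeq P k) ⬝ᵥ grad (zhaoSeq P (m + 2 - k)) := by
  rw [zhaoSeq]
  congr 1
  exact Finset.sum_attach (Finset.Icc 1 (m + 1))
    fun k => grad (zhaoSeq P k) ⬝ᵥ grad (zhaoSeq P (m + 2 - k))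

theorem zhaoSeq_one (P : MvPolynomial (Fin n) K) : zhaoSeq P 1 = P := by
  rw [zhaoSeq]

theorem grad_zhaoSeq_two (P : MvPolynomial (Fin n) K) :
    grad (zhaoSeq P 2) = hessian P *ᵥ grad P := by
  ext1 i
  have h2 : zhaoSeq P 2 = (1 / 2 : ℚ) • (grad P ⬝ᵥ grad P) := by
    rw [zhaoSeq_add_two P 0]
    simp [zhaoSeq_one]
  have h : pderiv i (grad P ⬝ᵥ grad P) = (2 : ℚ) • (hessian P *ᵥ grad P) i := by
    simp only [dotProduct, Matrix.mulVec, grad, hessian, Matrix.of_apply, map_sum,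
      Derivation.leibniz, smul_eq_mul, Finset.smul_sum]
    refine Finset.sum_congr rfl fun j _ => ?_
    rw [two_smul]
    ring
  rw [h2, grad, Derivation.map_smul_of_tower, h, smul_smul]
  norm_num

/-- If `P` is homogeneous and the coefficients of the entries of `(Hess P)³` lie in `I`, then so do
those of `Q⁽ᵐ⁾` for `m ≥ 3`. -/
theorem zhaoSeq_mem {P : MvPolynomial (Fin n) K} {d : ℕ} (hd : d ≠ 0)
    (hP : P.IsHomogeneous (d + 1)) {I : Ideal K}
    (hI : ∀ i j, (hessian P ^ 3) i j ∈ I.map (C : K →+* MvPolynomial (Fin n) K)) (m : ℕ)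
    (hm : 3 ≤ m) : zhaoSeq P m ∈ I.map (C : K →+* MvPolynomial (Fin n) K) := by
  have hH := hessian_sq_mulVec_grad_mem hd hP hI
  have h3 : (hessian P *ᵥ grad P) ⬝ᵥ grad P ∈ I.map (C : K →+* MvPolynomial (Fin n) K) := by
    apply mem_of_nsmul_mem hd
    rw [← dotProduct_smul, ← hessian_mulVec_X hP, ← hessian_mulVec_dotProduct]
    exact dotProduct_mem hH _
  have h4 : (hessian P *ᵥ grad P) ⬝ᵥ (hessian P *ᵥ grad P) ∈
      I.map (C : K →+* MvPolynomial (Fin n) K) := by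
    rw [← hessian_mulVec_dotProduct]
    exact dotProduct_mem hH _
  induction m using Nat.strong_induction_on with
  | _ m ih =>
    obtain ⟨m, rfl⟩ : ∃ k, m = k + 2 := ⟨m - 2, by omega⟩
    rw [zhaoSeq_add_two]
    refine Submodule.smul_of_tower_mem _ _ (Ideal.sum_mem _ fun k hk => ?_)
    rw [Finset.mem_Icc] at hk
    by_cases hk3 : 3 ≤ k
    · exact dotProduct_mem (fun i => pderiv_mem_map_C (ih k (by omega) hk3) i) _
    by_cases hl3 : 3 ≤ m + 2 - k
    · rw [dotProduct_comm]
      exact dotProduct_mem (fun i => pderiv_mem_map_C (ih _ (by omega) hl3) i) _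
    -- the remaining index pairs `(k, l)` are `(1, 2)`, `(2, 1)` and `(2, 2)`
    obtain ⟨rfl, hl⟩ | ⟨rfl, hl⟩ | ⟨rfl, hl⟩ : (k = 1 ∧ m + 2 - k = 2) ∨
        (k = 2 ∧ m + 2 - k = 1) ∨ (k = 2 ∧ m + 2 - k = 2) := by omega
    · rw [hl, zhaoSeq_one, grad_zhaoSeq_two, dotProduct_comm]
      exact h3
    · rw [hl, zhaoSeq_one, grad_zhaoSeq_two]
      exact h3
    · rw [hl, grad_zhaoSeq_two]
      exact h4

end Zhao

/-- over `R = ℚ[c_q : |q| = d + 1]`, with `P = ∑ c_q Xᵠ` the generic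
homogeneous polynomial of degree d + 1, every coefficient of `Q⁽ᵐ⁾` (`m ≥ 3`) lies in
the ideal generated by the coefficients of the entries of `(Hess P)^3`. -/
theorem generic_ideal_membership_hessian_cube
    (n : ℕ) (hn : 1 ≤ n) (d : ℕ) (hd : 2 ≤ d)
    (P : MvPolynomial (Fin n)
      (MvPolynomial {q : Fin n →₀ ℕ // (q.sum fun _ e => e) = d + 1} ℚ))
    (hPdef : P =
      ∑ q ∈ (Finset.finsuppAntidiag (Finset.univ : Finset (Fin n)) (d + 1)).attach,
        monomial q.1 (X ⟨q.1, (Finset.mem_finsuppAntidiag'.mp q.2).1⟩))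
    (I : Ideal (MvPolynomial {q : Fin n →₀ ℕ // (q.sum fun _ e => e) = d + 1} ℚ))
    (hI : I = Ideal.span {r | ∃ i j : Fin n, ∃ q : Fin n →₀ ℕ,
        r = coeff q ((hessian P ^ 3) i j)}) :
    ∀ m : ℕ, 3 ≤ m → ∀ q : Fin n →₀ ℕ, coeff q (zhaoSeq P m) ∈ I := by
  subst hI
  have hP : P.IsHomogeneous (d + 1) := by
    rw [hPdef]
    refine IsHomogeneous.sum _ _ _ fun q _ => isHomogeneous_monomial _ ?_
    exact (Finset.mem_finsuppAntidiag'.mp q.2).1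
  intro m hm
  refine mem_map_C_iff.mp (zhaoSeq_mem (by omega) hP (fun i j => ?_) m hm)
  exact mem_map_C_iff.mpr fun q => Ideal.subset_span ⟨i, j, q, rfl⟩
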